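/- arXiv:1105.1816 — 7 statements merged into one kernel-verified Lean document; each statement's English description precedes it below -/
import Mathlib

section
/- Let H and K be complex Hilbert spaces (complete inner product spaces over ℂ), I an index type, (ψ_i)_{i∈I} a family in H and (φ_i)_{i∈I} a family in K such that ⟪ψ_i, ψ_j⟫ = ⟪φ_i, φ_j⟫ for all i, j ∈ I. Then there exists a linear isometry V from the topological closure of the ℂ-linear span of {ψ_i : i ∈ I} into K such that V ψ_i = φ_i for all i ∈ I. -/
open scoped ComplexInnerProductSpace

/-- If two families `ψ : I → H` and `φ : I → K` in complex Hilbert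
spaces have equal Gram matrices, then there is a linear isometry from the topological
closure of the span of the `ψ i` into `K` sending each `ψ i` to `φ i`. -/
theorem exists_isometry_of_gram_eq
    {H : Type*} [NormedAddCommGroup H] [InnerProductSpace ℂ H] [CompleteSpace H]
    {K : Type*} [NormedAddCommGroup K] [InnerProductSpace ℂ K] [CompleteSpace K]
    {I : Type*} (ψ : I → H) (φ : I → K)
    (hgram : ∀ i j, ⟪ψ i, ψ j⟫ = ⟪φ i, φ j⟫) :
    ∃ V : (Submodule.span ℂ (Set.range ψ)).topologicalClosure →ₗᵢ[ℂ] K,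
      ∀ i, V ⟨ψ i, (Submodule.span ℂ (Set.range ψ)).le_topologicalClosure
              (Submodule.subset_span ⟨i, rfl⟩)⟩ = φ i := by
  let S := Submodule.span ℂ (Set.range ψ)
  let ψ' : I → S.topologicalClosure := fun i =>
    ⟨ψ i, S.le_topologicalClosure (Submodule.subset_span ⟨i, rfl⟩)⟩
  let e : (I →₀ ℂ) →ₗ[ℂ] S.topologicalClosure := Finsupp.linearCombination ℂ ψ'
  let f : (I →₀ ℂ) →ₗ[ℂ] K := Finsupp.linearCombination ℂ φ
  have he : ∀ x, ((e x : S.topologicalClosure) : H) = Finsupp.linearCombination ℂ ψ x := by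
    intro x
    have := Finsupp.apply_linearCombination ℂ S.topologicalClosure.subtype ψ' x
    exact this
  have hn : ∀ x, ‖f x‖ = ‖e x‖ := by
    intro x
    rw [← Submodule.norm_coe, he]
    have h : ⟪f x, f x⟫ = ⟪Finsupp.linearCombination ℂ ψ x, Finsupp.linearCombination ℂ ψ x⟫ := by
      simp only [f, Finsupp.linearCombination_apply, Finsupp.sum_inner, Finsupp.inner_sum,
        inner_smul_left, inner_smul_right, hgram]
    rw [@norm_eq_sqrt_re_inner ℂ, @norm_eq_sqrt_re_inner ℂ, h]
  have hd : DenseRange e := by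
    intro y
    rw [closure_subtype]
    have hy : (y : H) ∈ closure (S : Set H) := y.2
    convert hy using 2
    ext z
    constructor
    · rintro ⟨_, ⟨x, rfl⟩, rfl⟩
      rw [he]
      exact (Finsupp.mem_span_range_iff_exists_finsupp).2 ⟨x, rfl⟩
    · intro hz
      obtain ⟨x, hx⟩ := (Finsupp.mem_span_range_iff_exists_finsupp).1 hz
      exact ⟨e x, ⟨x, rfl⟩, (he x).trans hx⟩
  have hV : ∀ x, f.extendOfNorm e (e x) = f x := fun x =>
    LinearMap.extendOfNorm_eq hd ⟨1, fun x => by rw [hn, one_mul]⟩ x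
  refine ⟨⟨(f.extendOfNorm e).toLinearMap, fun y => ?_⟩, fun i => ?_⟩
  · refine hd.induction_on (p := fun y => ‖f.extendOfNorm e y‖ = ‖y‖) y ?_ ?_
    · exact isClosed_eq (by fun_prop) (by fun_prop)
    · intro x
      rw [hV, hn]
  · have := hV (Finsupp.single i 1)
    simpa [e, f, ψ'] using this
end

section
/- Let G be a group, H a finite-dimensional complex inner product space, and U : G →* (H ≃ₗᵢ[ℂ] H) a unitary representation of G on H. For unit vectors ψ, φ ∈ H, the following are equivalent: (A) there exists a G-invariant unitary V on H (i.e. V ∘ U(g) = U(g) ∘ V for all g ∈ G) with V ψ = φ; (B) there exists a unitary V on H such that V (U(g) ψ) = U(g) φ for all g ∈ G. -/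
open scoped ComplexInnerProductSpace

theorem aux_polar_unit {H : Type*} [NormedAddCommGroup H] [InnerProductSpace ℂ H]
    [FiniteDimensional ℂ H] (T : Set (H →L[ℂ] H)) (B : H →L[ℂ] H) (hB : IsUnit B)
    (h1 : ∀ t ∈ T, Commute t B) (h2 : ∀ t ∈ T, Commute t (star B)) :
    ∃ u ∈ unitary (H →L[ℂ] H), (∀ t ∈ T, Commute t u) ∧ u * CFC.abs B = B := by
  have hsq := CFC.abs_mul_abs B
  have hu : IsUnit (CFC.abs B) := by
    have : IsUnit (CFC.abs B * CFC.abs B) := by rw [hsq]; exact hB.star.mul hB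
    exact ((Commute.refl (CFC.abs B)).isUnit_mul_iff.1 this).1
  obtain ⟨a, ha⟩ := hu
  have hsa : star (a : H →L[ℂ] H) = a := by
    rw [ha]; exact (CFC.abs_nonneg B).isSelfAdjoint
  have hsi : star (↑a⁻¹ : H →L[ℂ] H) = ↑a⁻¹ := by
    have : star a = a := Units.ext hsa
    rw [← Units.coe_star, star_inv, this]
  have hU : IsUnit (B * ↑a⁻¹) := hB.mul a⁻¹.isUnit
  have hss : star (B * ↑a⁻¹) * (B * ↑a⁻¹) = 1 := by
    rw [star_mul, hsi, mul_assoc, ← mul_assoc (star B), ← hsq, ← ha]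
    simp [mul_assoc]
  refine ⟨B * ↑a⁻¹, ?_, ?_, ?_⟩
  · rw [Unitary.mem_iff]
    refine ⟨hss, ?_⟩
    obtain ⟨c, hc⟩ := hU
    rw [← hc] at hss ⊢
    have : star (c : H →L[ℂ] H) = ↑c⁻¹ := by
      rw [← mul_one (star (c : H →L[ℂ] H)), ← c.mul_inv, ← mul_assoc, hss, one_mul]
    rw [this]; simp
  · intro t ht
    have : Commute t (a : H →L[ℂ] H) := by
      rw [ha]; exact (Commute.cfcAbs_left (h1 t ht).symm (by simpa using (h2 t ht).symm.star_star)).symm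
    exact (h1 t ht).mul_right this.units_inv_right
  · rw [← ha, mul_assoc]; simp

open Filter Topology in
theorem aux_polar {H : Type*} [NormedAddCommGroup H] [InnerProductSpace ℂ H]
    [FiniteDimensional ℂ H] (T : Set (H →L[ℂ] H)) (W : H →L[ℂ] H)
    (h1 : ∀ t ∈ T, Commute t W) (h2 : ∀ t ∈ T, Commute t (star W)) :
    ∃ u ∈ unitary (H →L[ℂ] H), (∀ t ∈ T, Commute t u) ∧ u * CFC.abs W = W := by
  have hfin : (spectrum ℂ W).Finite := by
    have := Module.End.finite_spectrum (K := ℂ) (W : H →ₗ[ℂ] H)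
    refine this.subset fun μ hμ h => hμ ?_
    rw [spectrum.mem_resolventSet_iff] at h ⊢
    have e := h.map (Module.End.toContinuousLinearMap (𝕜 := ℂ) H)
    convert e using 1
    ext x
    rfl
  have hev : ∀ᶠ z in 𝓝[≠] (0 : ℂ), IsUnit (algebraMap ℂ (H →L[ℂ] H) z - W) := by
    have : ∀ᶠ z in 𝓝[≠] (0 : ℂ), z ∉ spectrum ℂ W \ {0} := by
      have hc : IsClosed (spectrum ℂ W \ {0}) := (hfin.subset Set.sdiff_subset).isClosed
      exact mem_nhdsWithin_of_mem_nhds (hc.isOpen_compl.mem_nhds (by simp))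
    filter_upwards [this, self_mem_nhdsWithin] with z hz hz0
    by_contra h
    exact hz ⟨h, hz0⟩
  obtain ⟨z, hz⟩ := Filter.exists_seq_tendsto (𝓝[≠] (0 : ℂ))
  obtain ⟨N, hN⟩ := eventually_atTop.1 (hz.eventually hev)
  have hB : ∀ n, IsUnit (W - algebraMap ℂ (H →L[ℂ] H) (z (n + N))) := fun n => by
    rw [← neg_sub]; exact (hN (n + N) (by omega)).neg
  have hp := fun n => aux_polar_unit T _ (hB n)
    (fun t ht => (h1 t ht).sub_right (Algebra.commutes _ t).symm)
    (fun t ht => by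
      rw [star_sub, ← algebraMap_star_comm]
      exact (h2 t ht).sub_right (Algebra.commutes _ t).symm)
  choose u hu hc hm using hp
  have : ProperSpace (H →L[ℂ] H) := FiniteDimensional.proper ℂ _
  have hK : IsCompact ((unitary (H →L[ℂ] H) : Submonoid _) : Set (H →L[ℂ] H)) := by
    refine Metric.isCompact_of_isClosed_isBounded isClosed_unitary ?_
    refine (Metric.isBounded_closedBall (x := (0 : H →L[ℂ] H)) (r := 1)).subset ?_
    intro v hv
    rw [mem_closedBall_zero_iff]
    refine ContinuousLinearMap.opNorm_le_bound _ zero_le_one fun x => ?_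
    rw [one_mul]; exact (Unitary.norm_map ⟨v, hv⟩ x).le
  obtain ⟨v, hv, s, hs, hlim⟩ := hK.tendsto_subseq hu
  refine ⟨v, hv, fun t ht => ?_, ?_⟩
  · refine tendsto_nhds_unique (hlim.const_mul t) ?_
    have := hlim.mul_const t
    refine this.congr fun n => ?_
    exact (hc (s n) t ht).symm
  · have hz0 : Tendsto (fun n => z (s n + N)) atTop (𝓝 0) :=
      (hz.mono_right nhdsWithin_le_nhds).comp ((tendsto_add_atTop_nat N).comp hs.tendsto_atTop)
    have hW : Tendsto (fun n => W - algebraMap ℂ (H →L[ℂ] H) (z (s n + N))) atTop (𝓝 W) := by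
      have := ((continuous_algebraMap ℂ (H →L[ℂ] H)).tendsto 0).comp hz0
      simpa using this.const_sub W
    have hA := (CFC.continuous_abs.tendsto W).comp hW
    refine tendsto_nhds_unique (hlim.mul hA) (hW.congr fun n => ?_)
    exact (hm (s n)).symm

/-- **Lemma 2.** For a unitary representation `U` of a group `G` on a
finite-dimensional complex inner product space `H` and unit vectors `ψ, φ`, the
following are equivalent: (A) some `G`-invariant unitary maps `ψ` to `φ`; (B) some
unitary maps `U g ψ` to `U g φ` for every `g`. -/
theorem exists_invariant_unitary_iff_exists_unitary_on_orbit
    {G : Type*} [Group G]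
    {H : Type*} [NormedAddCommGroup H] [InnerProductSpace ℂ H] [FiniteDimensional ℂ H]
    (U : G →* (H ≃ₗᵢ[ℂ] H)) (ψ φ : H) (hψ : ‖ψ‖ = 1) (hφ : ‖φ‖ = 1) :
    (∃ V : H ≃ₗᵢ[ℂ] H, (∀ g : G, ∀ x : H, V (U g x) = U g (V x)) ∧ V ψ = φ) ↔
      (∃ V : H ≃ₗᵢ[ℂ] H, ∀ g : G, V (U g ψ) = U g φ) := by
  constructor
  · rintro ⟨V, h, rfl⟩
    exact ⟨V, fun g => h g ψ⟩
  rintro ⟨V, hV⟩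
  let S : Submodule ℂ H := Submodule.span ℂ (Set.range fun g => U g ψ)
  have hS : ∀ g, ∀ x ∈ S, U g x ∈ S ∧ V (U g x) = U g (V x) := by
    intro g x hx
    induction hx using Submodule.span_induction with
    | mem x hx =>
      obtain ⟨k, rfl⟩ := hx
      have e : ∀ y, U g (U k y) = U (g * k) y := fun y => by rw [map_mul]; rfl
      simp only [hV, e]
      exact ⟨Submodule.subset_span ⟨_, rfl⟩, trivial⟩
    | zero => simp
    | add x y _ _ hx hy => simp [hx.2, hy.2, S.add_mem hx.1 hy.1]
    | smul c x _ hx => simp [hx.2, S.smul_mem c hx.1]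
  have hinv : ∀ g x y, ⟪U g x, y⟫ = ⟪x, U g⁻¹ y⟫ := fun g x y => by
    rw [← (U g).inner_map_map x (U g⁻¹ y)]
    congr 1
    change y = (U g * U g⁻¹) y
    rw [← map_mul]; simp
  let P : H →L[ℂ] H := S.starProjection
  have hP : ∀ g x, P (U g x) = U g (P x) := by
    intro g x
    refine Submodule.eq_starProjection_of_mem_of_inner_eq_zero
      (hS g _ (Submodule.starProjection_apply_mem S x)).1 fun w hw => ?_
    rw [← map_sub, hinv]
    exact Submodule.starProjection_inner_eq_zero x _ (hS g⁻¹ w hw).1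
  let V' : unitary (H →L[ℂ] H) := Unitary.linearIsometryEquiv.symm V
  let U' : G → unitary (H →L[ℂ] H) := fun g => Unitary.linearIsometryEquiv.symm (U g)
  have hU'inv : ∀ g, star (U' g : H →L[ℂ] H) = U' g⁻¹ := fun g => by
    have : star (U' g) = U' g⁻¹ := by
      simp only [U', map_inv]; rfl
    rw [← this]; rfl
  let W : H →L[ℂ] H := V' * P
  have hW : ∀ g, Commute (U' g : H →L[ℂ] H) W := by
    intro g
    ext x
    change U g (V (P x)) = V (P (U g x))
    rw [hP, (hS g _ (Submodule.starProjection_apply_mem S x)).2]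
  have hPP : IsStarProjection P := isStarProjection_starProjection
  have habs : CFC.abs W = P := by
    have : star W * W = P := by
      simp only [W, star_mul]
      rw [mul_assoc, ← mul_assoc (star (V' : H →L[ℂ] H)), Unitary.coe_star_mul_self, one_mul,
        hPP.isSelfAdjoint.star_eq, hPP.isIdempotentElem.eq]
    rw [CFC.abs, this]
    exact CFC.sqrt_unique hPP.isIdempotentElem.eq hPP.nonneg
  obtain ⟨u, hu, hc, hm⟩ := aux_polar (Set.range fun g => (U' g : H →L[ℂ] H)) W
    (by rintro _ ⟨g, rfl⟩; exact hW g)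
    (by
      rintro _ ⟨g, rfl⟩
      have := (hW g⁻¹).star_star
      rwa [hU'inv, inv_inv] at this)
  refine ⟨Unitary.linearIsometryEquiv ⟨u, hu⟩, fun g x => ?_, ?_⟩
  · exact congr($((hc _ ⟨g, rfl⟩).symm.eq) x)
  · have h1 : ψ ∈ S := Submodule.subset_span ⟨1, by simp⟩
    have h2 : P ψ = ψ := Submodule.starProjection_eq_self_iff.2 h1
    have h3 := congr($hm ψ)
    rw [habs] at h3
    change u (P ψ) = V (P ψ) at h3
    rw [h2] at h3
    change u ψ = φ
    rw [h3]
    simpa using hV 1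
end

section
/- Let G be a group, H a finite-dimensional complex inner product space, and U : G →* (H ≃ₗᵢ[ℂ] H) a unitary representation of G on H. Two unit vectors ψ, φ ∈ H are unitarily G-equivalent (there exists a G-invariant unitary V on H with V ψ = φ) if and only if their characteristic functions coincide: ⟪ψ, U(g) ψ⟫ = ⟪φ, U(g) φ⟫ for all g ∈ G. -/
open scoped ComplexInnerProductSpace

theorem aux_mul_apply {H : Type*} [NormedAddCommGroup H] [InnerProductSpace ℂ H]
    (a b : H ≃ₗᵢ[ℂ] H) (x : H) : (a * b) x = a (b x) := rfl

theorem aux_polar_s3 {A : Type*} [CStarAlgebra A] [PartialOrder A] [StarOrderedRing A]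
    (B : A) (hB : IsUnit B) :
    ∃ V ∈ unitary A, 0 ≤ star V * B ∧
      ∀ C, Commute C B → Commute C (star B) → Commute C V := by
  have hu : IsUnit (CFC.abs B) := by
    unfold CFC.abs
    rw [CFC.isUnit_sqrt_iff _ (star_mul_self_nonneg B)]
    exact hB.star.mul hB
  obtain ⟨p, hp⟩ := hu
  have hsa : star (p : A) = p := by
    rw [hp]; exact (IsSelfAdjoint.of_nonneg (CFC.abs_nonneg B)).star_eq
  have hpp : (p : A) * p = star B * B := by rw [hp]; exact CFC.abs_mul_abs B
  have hsi : star (↑p⁻¹ : A) = ↑p⁻¹ := by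
    have : star p = p := Units.ext hsa
    rw [← Units.coe_star_inv, this]
  have hVB : star (B * ↑p⁻¹) * B = p := by
    rw [star_mul, hsi, mul_assoc, ← hpp, ← mul_assoc, Units.inv_mul, one_mul]
  refine ⟨B * ↑p⁻¹, ?_, ?_, ?_⟩
  · have h1 : star (B * (↑p⁻¹ : A)) * (B * ↑p⁻¹) = 1 := by
      rw [← mul_assoc, hVB, Units.mul_inv]
    refine Unitary.mem_iff.2 ⟨h1, ?_⟩
    have hU : IsUnit (B * (↑p⁻¹ : A)) := hB.mul p⁻¹.isUnit
    obtain ⟨w, hw⟩ := hU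
    rw [← hw] at h1 ⊢
    have h2 : star (w : A) = ↑w⁻¹ := by
      rw [← mul_one (star (w : A)), ← Units.mul_inv w, ← mul_assoc, h1, one_mul]
    rw [h2, Units.mul_inv]
  · rw [hVB, hp]; exact CFC.abs_nonneg B
  · intro C h1 h2
    refine h1.mul_right ?_
    have : Commute C (p : A) := by rw [hp]; exact (Commute.cfcAbs_right h1.symm (by simpa using h2.star_star.symm))
    exact this.units_inv_right

theorem aux_polar' {H : Type*} [NormedAddCommGroup H] [InnerProductSpace ℂ H]
    [FiniteDimensional ℂ H] [CompleteSpace H] (A : H →L[ℂ] H) :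
    ∃ V ∈ unitary (H →L[ℂ] H), 0 ≤ star V * A ∧
      ∀ C, Commute C A → Commute C (star A) → Commute C V := by
  have : ProperSpace (H →L[ℂ] H) := FiniteDimensional.proper ℂ _
  have hfin : (spectrum ℂ (-A)).Finite := by
    have := Module.End.finite_spectrum (K := ℂ) (V := H) ((-A : H →L[ℂ] H) : H →ₗ[ℂ] H)
    rwa [ContinuousLinearMap.spectrum_eq]
  have hex : ∀ n : ℕ, ∃ e : ℝ, 0 < e ∧ e < 1 / ((n : ℝ) + 1) ∧
      IsUnit (A + algebraMap ℂ (H →L[ℂ] H) e) := by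
    intro n
    have h0 : (0 : ℝ) < 1 / ((n : ℝ) + 1) := by positivity
    have hf : ((fun e : ℝ => (e : ℂ)) ⁻¹' (spectrum ℂ (-A))).Finite :=
      hfin.preimage (Complex.ofReal_injective.injOn)
    obtain ⟨e, he, hne⟩ := (Set.Ioo_infinite h0).exists_notMem_finite hf
    refine ⟨e, he.1, he.2, ?_⟩
    have := spectrum.notMem_iff.1 hne
    rwa [sub_neg_eq_add, add_comm] at this
  choose e he0 he1 hu using hex
  have het : Filter.Tendsto e Filter.atTop (nhds 0) :=
    squeeze_zero (fun n => (he0 n).le) (fun n => (he1 n).le) tendsto_one_div_add_atTop_nhds_zero_nat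
  have hBt : Filter.Tendsto (fun n => A + algebraMap ℂ (H →L[ℂ] H) (e n)) Filter.atTop (nhds A) := by
    have hc : Continuous (fun t : ℝ => A + algebraMap ℂ (H →L[ℂ] H) (t : ℂ)) := by
      have := continuous_algebraMap ℂ (H →L[ℂ] H)
      fun_prop
    simpa [Function.comp_def] using (hc.tendsto 0).comp het
  choose V hV hpos hcomm using fun n => aux_polar_s3 _ (hu n)
  have hcpt : IsCompact (unitary (H →L[ℂ] H) : Set (H →L[ℂ] H)) := by
    refine Metric.isCompact_of_isClosed_isBounded isClosed_unitary ?_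
    refine (Metric.isBounded_closedBall (x := (0 : H →L[ℂ] H)) (r := 1)).subset fun u hu => ?_
    rw [mem_closedBall_zero_iff]
    exact ContinuousLinearMap.opNorm_le_bound _ zero_le_one fun x => by
      rw [one_mul]; exact (Unitary.norm_map ⟨u, hu⟩ x).le
  obtain ⟨W, hW, s, hs, hlim⟩ := hcpt.tendsto_subseq hV
  refine ⟨W, hW, ?_, ?_⟩
  · have ht : Filter.Tendsto (fun n => star (V (s n)) * (A + algebraMap ℂ (H →L[ℂ] H) (e (s n))))
        Filter.atTop (nhds (star W * A)) :=
      (hlim.star).mul (hBt.comp hs.tendsto_atTop)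
    exact CStarAlgebra.isClosed_nonneg.mem_of_tendsto ht (Filter.Eventually.of_forall fun n => hpos _)
  · intro C h1 h2
    have hc : ∀ n, Commute C (V n) := fun n => by
      refine hcomm n C (h1.add_right (Algebra.commutes _ _).symm) ?_
      rw [star_add]
      refine h2.add_right ?_
      rw [← algebraMap_star_comm]
      exact (Algebra.commutes _ _).symm
    exact tendsto_nhds_unique ((hlim.const_mul C).congr fun n => hc _) (hlim.mul_const C)

theorem aux_intertwiner
    {G : Type*} [Group G]
    {H : Type*} [NormedAddCommGroup H] [InnerProductSpace ℂ H] [FiniteDimensional ℂ H]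
    (U : G →* (H ≃ₗᵢ[ℂ] H)) (ψ φ : H) (h : ∀ g : G, ⟪ψ, U g ψ⟫ = ⟪φ, U g φ⟫) :
    ∃ A : H →ₗ[ℂ] H, (∀ g x, A (U g x) = U g (A x)) ∧ A ψ = φ ∧ ∀ x, ⟪φ, A x⟫ = ⟪ψ, x⟫ := by
  have hU : ∀ (a b : G) (v : H), ⟪U a v, U b v⟫ = ⟪v, U (a⁻¹ * b) v⟫ := by
    intro a b v
    rw [← (U a).inner_map_map v, ← aux_mul_apply, ← map_mul]
    simp
  let T : H → ((G →₀ ℂ) →ₗ[ℂ] H) := fun v => Finsupp.linearCombination ℂ (fun g => U g v)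
  have hT : ∀ f f', ⟪T ψ f, T ψ f'⟫ = ⟪T φ f, T φ f'⟫ := by
    intro f f'
    simp only [T, Finsupp.linearCombination_apply, Finsupp.sum, sum_inner, inner_sum,
      inner_smul_left, inner_smul_right, hU, h]
  have hker : LinearMap.ker (T ψ) ≤ LinearMap.ker (T φ) := by
    intro f hf
    rw [LinearMap.mem_ker] at hf ⊢
    rw [← inner_self_eq_zero (𝕜 := ℂ), ← hT, hf, inner_zero_left]
  obtain ⟨A0, hA0⟩ := LinearMap.exists_extend (p := LinearMap.range (T ψ))
    (((LinearMap.ker (T ψ)).liftQ (T φ) hker) ∘ₗ (T ψ).quotKerEquivRange.symm.toLinearMap)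
  have hA0' : ∀ f, A0 (T ψ f) = T φ f := by
    intro f
    have := LinearMap.congr_fun hA0 ⟨T ψ f, LinearMap.mem_range_self _ f⟩
    simp only [LinearMap.comp_apply, Submodule.subtype_apply] at this
    rw [this]
    have h2 : (T ψ).quotKerEquivRange.symm ⟨T ψ f, LinearMap.mem_range_self _ f⟩
      = (LinearMap.ker (T ψ)).mkQ f := (T ψ).quotKerEquivRange_symm_apply_image f _
    simp [h2]
  let K := LinearMap.range (T ψ)
  let A : H →ₗ[ℂ] H := A0 ∘ₗ (K.starProjection : H →ₗ[ℂ] H)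
  have hAK : ∀ f, A (T ψ f) = T φ f := by
    intro f
    have : K.starProjection (T ψ f) = T ψ f :=
      Submodule.starProjection_eq_self_iff.2 (LinearMap.mem_range_self _ f)
    simp [A, this, hA0']
  have hAp : ∀ x ∈ Kᗮ, A x = 0 := by
    intro x hx
    have : K.starProjection x = 0 := by
      rwa [Submodule.starProjection_apply_eq_zero_iff]
    simp [A, this]
  have hUT : ∀ g v f, U g (T v f) = T v (Finsupp.mapDomain (fun k => g * k) f) := by
    intro g v f
    simp only [T, Finsupp.linearCombination_mapDomain]
    simp [Finsupp.linearCombination_apply, Finsupp.sum, map_sum, aux_mul_apply]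
  have hT1 : ∀ v, T v (Finsupp.single 1 1) = v := by intro v; simp [T]
  have hdec : ∀ x, ∃ f, ∃ y ∈ Kᗮ, x = T ψ f + y := by
    intro x
    obtain ⟨k, ⟨f, rfl⟩, y, hy, e⟩ := K.exists_add_mem_mem_orthogonal x
    exact ⟨f, y, hy, e⟩
  have hUp : ∀ g, ∀ y ∈ Kᗮ, U g y ∈ Kᗮ := by
    rintro g y hy _ ⟨f, rfl⟩
    rw [← (U g⁻¹).inner_map_map, hUT, ← aux_mul_apply, ← map_mul]
    simpa using hy _ (LinearMap.mem_range_self _ _)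
  refine ⟨A, ?_, ?_, ?_⟩
  · intro g x
    obtain ⟨f, y, hy, rfl⟩ := hdec x
    rw [map_add, map_add, map_add, hAp _ (hUp g y hy), hAp y hy, hUT, hAK, hAK, add_zero, add_zero,
      hUT]
  · have := hAK (Finsupp.single 1 1)
    rwa [hT1, hT1] at this
  · intro x
    obtain ⟨f, y, hy, rfl⟩ := hdec x
    have h1 := hT (Finsupp.single 1 1) f
    have h2 := hy _ (LinearMap.mem_range_self (T ψ) (Finsupp.single 1 1))
    rw [hT1] at h1 h2
    rw [hT1] at h1
    rw [map_add, hAp y hy, hAK, add_zero, inner_add_right, h2, add_zero, h1]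

/-- **Theorem 2.** Two unit vectors `ψ, φ` of a finite-dimensional
unitary representation `U` of `G` are unitarily `G`-equivalent (some `G`-invariant
unitary maps `ψ` to `φ`) iff their characteristic functions coincide:
`⟪ψ, U g ψ⟫ = ⟪φ, U g φ⟫` for all `g`. -/
theorem unitarily_G_equivalent_iff_charFun_eq
    {G : Type*} [Group G]
    {H : Type*} [NormedAddCommGroup H] [InnerProductSpace ℂ H] [FiniteDimensional ℂ H]
    (U : G →* (H ≃ₗᵢ[ℂ] H)) (ψ φ : H) (hψ : ‖ψ‖ = 1) (hφ : ‖φ‖ = 1) :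
    (∃ V : H ≃ₗᵢ[ℂ] H, (∀ g : G, ∀ x : H, V (U g x) = U g (V x)) ∧ V ψ = φ) ↔
      (∀ g : G, ⟪ψ, U g ψ⟫ = ⟪φ, U g φ⟫) := by
  constructor
  · rintro ⟨V, hV, rfl⟩ g
    rw [← hV, V.inner_map_map]
  intro h
  have : CompleteSpace H := FiniteDimensional.complete ℂ H
  obtain ⟨A', hAU, hAψ, hAφ⟩ := aux_intertwiner U ψ φ h
  let A : H →L[ℂ] H := LinearMap.toContinuousLinearMap A'
  have hA : ∀ x, A x = A' x := fun x => rfl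
  obtain ⟨V, hV, hpos, hcomm⟩ := aux_polar' A
  let u : G → (H →L[ℂ] H) := fun g => ((U g).toContinuousLinearEquiv : H →L[ℂ] H)
  have hu : ∀ g x, u g x = U g x := fun g x => rfl
  have hus : ∀ g, star (u g) = u g⁻¹ := by
    intro g
    rw [ContinuousLinearMap.star_eq_adjoint]
    symm
    rw [ContinuousLinearMap.eq_adjoint_iff]
    intro x y
    rw [hu, hu, ← (U g).inner_map_map, ← aux_mul_apply, ← map_mul]
    simp
  have hc : ∀ g, Commute (u g) A := fun g => by
    ext x
    simp [hu, hA, hAU]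
  have hc' : ∀ g, Commute (u g) (star A) := fun g => by
    have := (hc g⁻¹).star_star
    rwa [hus, inv_inv] at this
  have hVc : ∀ g, Commute (u g) V := fun g => hcomm _ (hc g) (hc' g)
  have hAs : star A φ = ψ := by
    refine ext_inner_right ℂ fun x => ?_
    rw [ContinuousLinearMap.star_eq_adjoint, ContinuousLinearMap.adjoint_inner_left, hA, hAφ]
  set P := star V * A with hP
  have hPP : P (P ψ) = ψ := by
    have h1 : P * P = star A * A := by
      have : star P = P := (IsSelfAdjoint.of_nonneg hpos).star_eq
      nth_rewrite 1 [← this]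
      rw [hP, star_mul, star_star, mul_assoc, ← mul_assoc V, Unitary.mul_star_self_of_mem hV,
        one_mul]
    have h2 := congrArg (fun T : H →L[ℂ] H => T ψ) h1
    simp only [mul_apply_eq_comp] at h2
    rw [h2, hA, hAψ, hAs]
  have hw : P ψ = ψ := by
    have hp := (ContinuousLinearMap.nonneg_iff_isPositive P).1 hpos
    have h3 := hp.re_inner_nonneg_left (P ψ - ψ)
    rw [map_sub, hPP, ← neg_sub, inner_neg_left, map_neg, ← norm_sq_eq_re_inner] at h3
    have h4 : ‖P ψ - ψ‖ = 0 := by nlinarith [norm_nonneg (P ψ - ψ)]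
    exact sub_eq_zero.1 (norm_eq_zero.1 h4)
  refine ⟨Unitary.linearIsometryEquiv ⟨V, hV⟩, ?_, ?_⟩
  · intro g x
    exact (congrArg (fun T : H →L[ℂ] H => T x) (hVc g)).symm
  · change V ψ = φ
    have h5 : V (P ψ) = φ := by
      have h6 : V * P = A := by
        rw [hP, ← mul_assoc, Unitary.mul_star_self_of_mem hV, one_mul]
      rw [← mul_apply_eq_comp, h6, hA, hAψ]
    rwa [hw] at h5
end

section
/- Let G be a group, H₁ and H₂ complex Hilbert spaces, and U₁ : G →* (H₁ ≃ₗᵢ[ℂ] H₁), U₂ : G →* (H₂ ≃ₗᵢ[ℂ] H₂) unitary representations of G. Let ψ ∈ H₁ and φ ∈ H₂ be unit vectors with ⟪ψ, U₁(g) ψ⟫ = ⟪φ, U₂(g) φ⟫ for all g ∈ G. Then there exists a linear isometry V from the topological closure of the ℂ-linear span of the orbit {U₁(g) ψ : g ∈ G} into H₂ such that V (U₁(g) ψ) = U₂(g) φ for all g ∈ G; in particular V ψ = φ. -/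
open scoped ComplexInnerProductSpace

/-- If unit vectors `ψ ∈ H₁` and `φ ∈ H₂` of unitary representations
`U₁, U₂` of `G` on complex Hilbert spaces have equal characteristic functions, then
there is a linear isometry from the closure of the span of the orbit `{U₁ g ψ}` into
`H₂` sending `U₁ g ψ` to `U₂ g φ` for every `g`; in particular it sends `ψ` to `φ`. -/
theorem exists_isometry_on_orbit_of_charFun_eq
    {G : Type*} [Group G]
    {H₁ : Type*} [NormedAddCommGroup H₁] [InnerProductSpace ℂ H₁] [CompleteSpace H₁]
    {H₂ : Type*} [NormedAddCommGroup H₂] [InnerProductSpace ℂ H₂] [CompleteSpace H₂]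
    (U₁ : G →* (H₁ ≃ₗᵢ[ℂ] H₁)) (U₂ : G →* (H₂ ≃ₗᵢ[ℂ] H₂))
    (ψ : H₁) (φ : H₂) (hψ : ‖ψ‖ = 1) (hφ : ‖φ‖ = 1)
    (hchar : ∀ g : G, ⟪ψ, U₁ g ψ⟫ = ⟪φ, U₂ g φ⟫) :
    ∃ V : (Submodule.span ℂ (Set.range fun g : G => U₁ g ψ)).topologicalClosure →ₗᵢ[ℂ] H₂,
      (∀ g : G,
        V ⟨U₁ g ψ, (Submodule.span ℂ (Set.range fun g : G => U₁ g ψ)).le_topologicalClosure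
              (Submodule.subset_span ⟨g, rfl⟩)⟩ = U₂ g φ) ∧
      V ⟨ψ, (Submodule.span ℂ (Set.range fun g : G => U₁ g ψ)).le_topologicalClosure
              (Submodule.subset_span ⟨1, by simp⟩)⟩ = φ := by
  have hinner : ∀ g h : G, ⟪U₁ g ψ, U₁ h ψ⟫ = ⟪U₂ g φ, U₂ h φ⟫ := by
    intro g h
    have h1 : U₁ h ψ = U₁ g (U₁ (g⁻¹ * h) ψ) := by
      have h0 := DFunLike.congr_fun (map_mul U₁ g (g⁻¹ * h)) ψ
      rw [mul_inv_cancel_left] at h0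
      exact h0
    have h2 : U₂ h φ = U₂ g (U₂ (g⁻¹ * h) φ) := by
      have h0 := DFunLike.congr_fun (map_mul U₂ g (g⁻¹ * h)) φ
      rw [mul_inv_cancel_left] at h0
      exact h0
    rw [h1, h2, LinearIsometryEquiv.inner_map_map, LinearIsometryEquiv.inner_map_map, hchar]
  let f₁ : (G →₀ ℂ) →ₗ[ℂ] H₁ := Finsupp.linearCombination ℂ (fun g : G => U₁ g ψ)
  let f₂ : (G →₀ ℂ) →ₗ[ℂ] H₂ := Finsupp.linearCombination ℂ (fun g : G => U₂ g φ)
  have hnorm : ∀ x, ‖f₂ x‖ = ‖f₁ x‖ := by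
    intro x
    have hin : ⟪f₂ x, f₂ x⟫ = ⟪f₁ x, f₁ x⟫ := by
      simp only [f₁, f₂, Finsupp.linearCombination_apply, Finsupp.sum, sum_inner, inner_sum,
        inner_smul_left, inner_smul_right, hinner]
    rw [@norm_eq_sqrt_re_inner ℂ, @norm_eq_sqrt_re_inner ℂ, hin]
  set S := Submodule.span ℂ (Set.range fun g : G => U₁ g ψ) with hS
  have hrange : LinearMap.range f₁ = S := Finsupp.range_linearCombination ℂ
  let e : (G →₀ ℂ) →ₗ[ℂ] S.topologicalClosure :=
    f₁.codRestrict S.topologicalClosure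
      (fun x => S.le_topologicalClosure (hrange ▸ LinearMap.mem_range_self f₁ x))
  have hdense : DenseRange e := by
    intro y
    rw [closure_subtype]
    have hy : (y : H₁) ∈ closure (S : Set H₁) := y.2
    refine closure_mono ?_ hy
    intro z hz
    have hz' : z ∈ LinearMap.range f₁ := by rw [hrange]; exact hz
    obtain ⟨x, rfl⟩ := hz'
    exact ⟨e x, ⟨x, rfl⟩, rfl⟩
  have hne : ∀ x, ‖f₂ x‖ = ‖e x‖ := fun x => hnorm x
  have hb : ∃ C : ℝ, ∀ x, ‖f₂ x‖ ≤ C * ‖e x‖ := ⟨1, fun x => by rw [hne, one_mul]⟩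
  let W := f₂.extendOfNorm e
  have hW : ∀ x, W (e x) = f₂ x := fun x => LinearMap.extendOfNorm_eq hdense hb x
  have hWn : ∀ y, ‖W y‖ = ‖y‖ := by
    intro y
    refine hdense.induction_on (p := fun y => ‖W y‖ = ‖y‖) y ?_ ?_
    · exact isClosed_eq W.continuous.norm continuous_norm
    · intro x
      rw [hW, hne]
  have key : ∀ g : G, ∀ h, W ⟨U₁ g ψ, h⟩ = U₂ g φ := by
    intro g h
    have h1 : (⟨U₁ g ψ, h⟩ : S.topologicalClosure) = e (Finsupp.single g 1) := by
      apply Subtype.ext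
      simp [e, f₁]
    rw [h1, hW]
    simp [f₂]
  refine ⟨⟨W.toLinearMap, hWn⟩, fun g => key g _, ?_⟩
  have h1 : ∀ x : H₁, x = U₁ 1 ψ → ∀ h, W ⟨x, h⟩ = U₂ 1 φ := by
    rintro x rfl h
    exact key 1 h
  have h2 : U₂ 1 φ = φ := by simp
  exact (h1 ψ (by simp) _).trans h2
end

section
/- Let G be a group, H a finite-dimensional complex inner product space, and U : G →* (H ≃ₗᵢ[ℂ] H) a unitary representation of G on H. Two unit vectors ψ, φ ∈ H are unitarily G-equivalent (there exists a G-invariant unitary V on H with V ψ = φ) if and only if ⟪ψ, A ψ⟫ = ⟪φ, A φ⟫ for every linear operator A in the ℂ-linear span of {U(g) : g ∈ G} inside the endomorphisms of H. (This condition is equivalent to the equality, for every irreducible representation μ of G, of the reductions onto irreps of the two states, i.e. of the partial traces over the multiplicity subsystems of the projections of |ψ⟩⟨ψ| and |φ⟩⟨φ| onto the isotypic component μ.) -/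
open scoped ComplexInnerProductSpace

section helpers
variable {H : Type*} [NormedAddCommGroup H] [InnerProductSpace ℂ H] [FiniteDimensional ℂ H]
  [CompleteSpace H]

lemma aux_proj_mem (s : Set (H →L[ℂ] H)) (K : Submodule ℂ H)
    (hK : ∀ g ∈ s, ∀ x ∈ K, g x ∈ K ∧ (star g) x ∈ K) :
    K.starProjection ∈ StarSubalgebra.centralizer ℂ s := by
  have key : ∀ g : H →L[ℂ] H, (∀ x ∈ K, g x ∈ K) → (∀ x ∈ K, (star g) x ∈ K) →
      g * K.starProjection = K.starProjection * g := by
    intro g h1 h2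
    ext x
    simp only [ContinuousLinearMap.mul_apply]
    symm
    apply Submodule.eq_starProjection_of_mem_orthogonal
    · exact h1 _ (Submodule.starProjection_apply_mem _ _)
    · rw [← map_sub, Submodule.mem_orthogonal]
      intro y hy
      rw [← ContinuousLinearMap.adjoint_inner_left, ← ContinuousLinearMap.star_eq_adjoint]
      exact (Submodule.mem_orthogonal _ _).1 (Submodule.sub_starProjection_mem_orthogonal x) _
        (h2 y hy)
  rw [StarSubalgebra.mem_centralizer_iff]
  intro g hg
  refine ⟨key g (fun x hx => (hK g hg x hx).1) (fun x hx => (hK g hg x hx).2), 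
    key (star g) (fun x hx => (hK g hg x hx).2) (fun x hx => ?_)⟩
  rw [star_star]; exact (hK g hg x hx).1

lemma aux_eig (s : Set (H →L[ℂ] H)) (Y : H →L[ℂ] H)
    (hY : Y ∈ StarSubalgebra.centralizer ℂ s) (h0 : Y ≠ 0) :
    ∃ E ∈ StarSubalgebra.centralizer ℂ s, ∃ r : ℝ, 0 < r ∧ E * E = E ∧ star E = E ∧ E ≠ 0 ∧
      star Y * Y * E = (r : ℂ) • E := by
  set T := star Y * Y with hT
  have hTM : T ∈ StarSubalgebra.centralizer ℂ s := mul_mem (star_mem hY) hY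
  have hin : ∀ x y, ⟪x, T y⟫ = ⟪Y x, Y y⟫ := by
    intro x y
    rw [hT, ContinuousLinearMap.mul_apply, ContinuousLinearMap.star_eq_adjoint,
      ContinuousLinearMap.adjoint_inner_right]
  have hsym : (T : H →ₗ[ℂ] H).IsSymmetric := by
    intro x y
    simp only [ContinuousLinearMap.coe_coe]
    rw [hin, ← inner_conj_symm, hin, inner_conj_symm]
  obtain ⟨i, hi⟩ : ∃ i, hsym.eigenvalues rfl i ≠ 0 := by
    by_contra! hc
    apply h0
    have hT0 : (T : H →ₗ[ℂ] H) = 0 := by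
      apply (hsym.eigenvectorBasis rfl).toBasis.ext
      intro i
      rw [OrthonormalBasis.coe_toBasis, hsym.apply_eigenvectorBasis, hc]
      simp
    ext x
    have h1 := hin x x
    have h2 : T x = 0 := LinearMap.congr_fun hT0 x
    rw [h2, inner_zero_right] at h1
    simpa using h1.symm
  set r := hsym.eigenvalues rfl i with hr
  set v := hsym.eigenvectorBasis rfl i with hv
  have hTv : T v = (r : ℂ) • v := hsym.apply_eigenvectorBasis rfl i
  have hv1 : ‖v‖ = 1 := (hsym.eigenvectorBasis rfl).orthonormal.1 i
  let K : Submodule ℂ H := (T - (r : ℂ) • (1 : H →L[ℂ] H)).toLinearMap.ker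
  have hKm : ∀ x, x ∈ K ↔ T x = (r : ℂ) • x := by
    intro x
    simp [K, sub_eq_zero]
  have hvK : v ∈ K := (hKm v).2 hTv
  refine ⟨K.starProjection, ?_, r, ?_, Submodule.isIdempotentElem_starProjection K,
    isSelfAdjoint_starProjection K, ?_, ?_⟩
  · apply aux_proj_mem
    rw [StarSubalgebra.mem_centralizer_iff] at hTM
    intro g hg x hx
    rw [hKm] at hx
    rw [hKm, hKm]
    have h1 := DFunLike.congr_fun (hTM g hg).1 x
    have h2 := DFunLike.congr_fun (hTM g hg).2 x
    simp only [ContinuousLinearMap.mul_apply] at h1 h2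
    rw [← h1, ← h2, hx]
    simp
  · have h1 := hin v v
    rw [hTv, inner_smul_right, inner_self_eq_norm_sq_to_K, inner_self_eq_norm_sq_to_K, hv1] at h1
    have h2 : r = ‖Y v‖ ^ 2 := by
      have : (r : ℂ) = ((‖Y v‖ ^ 2 : ℝ) : ℂ) := by
        push_cast
        simpa using h1
      exact_mod_cast this
    exact lt_of_le_of_ne (h2 ▸ sq_nonneg _) (Ne.symm hi)
  · intro h
    have h1 : K.starProjection v = v := Submodule.starProjection_eq_self_iff.2 hvK
    rw [h] at h1
    rw [← h1] at hv1
    simp at hv1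
  · ext x
    simp only [ContinuousLinearMap.mul_apply, ContinuousLinearMap.smul_apply]
    exact (hKm _).1 (Submodule.starProjection_apply_mem K x)

lemma aux_step (s : Set (H →L[ℂ] H)) (W : H →L[ℂ] H)
    (hW : W ∈ StarSubalgebra.centralizer ℂ s) (hPI : W * (star W * W) = W)
    (hker : ∃ x, W x = 0 ∧ x ≠ 0) :
    ∃ X ∈ StarSubalgebra.centralizer ℂ s, (1 - W * star W) * X * (1 - star W * W) ≠ 0 := by
  by_contra! hc
  let N : Submodule ℂ H :=
    { carrier := {x | ∀ X ∈ StarSubalgebra.centralizer ℂ s, ((1 - W * star W) * X) x = 0}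
      add_mem' := by
        intro a b ha hb X hX
        rw [map_add, ha X hX, hb X hX, add_zero]
      zero_mem' := by
        intro X hX
        rw [map_zero]
      smul_mem' := by
        intro c x hx X hX
        rw [map_smul, hx X hX, smul_zero] }
  have hNinv : ∀ A ∈ StarSubalgebra.centralizer ℂ s, ∀ x ∈ N, A x ∈ N := by
    intro A hA x hx X hX
    have := hx (X * A) (mul_mem hX hA)
    rwa [← mul_assoc, ContinuousLinearMap.mul_apply] at this
  obtain ⟨x, hx, hx0⟩ := hker
  have hxN : x ∈ N := by
    intro X hX
    have h := DFunLike.congr_fun (hc X hX) x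
    rw [ContinuousLinearMap.mul_apply] at h
    simpa [hx] using h
  have hWN : ∀ y ∈ N, W (star W y) = y := by
    intro y hy
    have := hy 1 (one_mem _)
    simp only [mul_one, ContinuousLinearMap.sub_apply, ContinuousLinearMap.one_apply,
      ContinuousLinearMap.mul_apply] at this
    exact (sub_eq_zero.1 this).symm
  let f : N →ₗ[ℂ] N := (W : H →ₗ[ℂ] H).restrict (hNinv W hW)
  have hsurj : Function.Surjective f := by
    intro y
    refine ⟨⟨star W y, hNinv _ (star_mem hW) _ y.2⟩, ?_⟩
    apply Subtype.ext
    exact hWN y y.2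
  have hinj := LinearMap.injective_iff_surjective.2 hsurj
  have : (⟨x, hxN⟩ : N) = 0 := by
    apply hinj
    rw [map_zero]
    apply Subtype.ext
    exact hx
  exact hx0 (congrArg Subtype.val this)

lemma aux_extend (s : Set (H →L[ℂ] H)) (W : H →L[ℂ] H)
    (hW : W ∈ StarSubalgebra.centralizer ℂ s) (hPI : W * (star W * W) = W)
    (hker : ∃ x, W x = 0 ∧ x ≠ 0) :
    ∃ W' ∈ StarSubalgebra.centralizer ℂ s, W' * (star W' * W') = W' ∧
      W' * (star W * W) = W ∧ star W' * W' * (star W * W) = star W * W ∧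
      W'.toLinearMap.ker < W.toLinearMap.ker := by
  obtain ⟨X, hX, hX0⟩ := aux_step s W hW hPI hker
  set Y := (1 - W * star W) * X * (1 - star W * W) with hYdef
  have hYM : Y ∈ StarSubalgebra.centralizer ℂ s :=
    mul_mem (mul_mem (sub_mem (one_mem _) (mul_mem hW (star_mem hW))) hX)
      (sub_mem (one_mem _) (mul_mem (star_mem hW) hW))
  obtain ⟨E, hE, r, hr, hEE, hEs, hE0, hTE⟩ := aux_eig s Y hYM hX0
  have hPI' : star W * W * star W = star W := by
    have := congrArg star hPI
    simpa [mul_assoc] using this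
  have hWsY : star W * Y = 0 := by
    have : star W * (1 - W * star W) = 0 := by
      rw [mul_sub, mul_one, ← mul_assoc, hPI', sub_self]
    rw [hYdef, ← mul_assoc, ← mul_assoc, this, zero_mul, zero_mul]
  have hYWs : Y * star W = 0 := by
    have : (1 - star W * W) * star W = 0 := by
      rw [sub_mul, one_mul, hPI', sub_self]
    rw [hYdef, mul_assoc, this, mul_zero]
  have hWYs : W * star Y = 0 := by
    have := congrArg star hYWs
    simpa using this
  have hrC : (r : ℂ) ≠ 0 := by exact_mod_cast hr.ne'
  have hWE : W * E = 0 := by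
    have h : W * (star Y * Y * E) = 0 := by
      rw [← mul_assoc, ← mul_assoc, hWYs, zero_mul, zero_mul]
    rw [hTE, mul_smul_comm] at h
    exact (smul_eq_zero.1 h).resolve_left hrC
  have hEWs : E * star W = 0 := by
    have := congrArg star hWE
    simpa [hEs] using this
  set c : ℂ := Complex.ofReal ((Real.sqrt r)⁻¹) with hc
  have hcc : c * c * r = 1 := by
    rw [hc, ← Complex.ofReal_mul, ← Complex.ofReal_mul, ← mul_inv, Real.mul_self_sqrt hr.le,
      inv_mul_cancel₀ hr.ne', Complex.ofReal_one]
  have hcs : star c = c := by rw [hc]; exact Complex.conj_ofReal _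
  set Z := c • (Y * E) with hZ
  have hZM : Z ∈ StarSubalgebra.centralizer ℂ s := SMulMemClass.smul_mem c (mul_mem hYM hE)
  have hZs : star Z = c • (E * star Y) := by
    rw [hZ, star_smul, star_mul, hcs, hEs]
  have hZZ : star Z * Z = E := by
    rw [hZs, hZ, smul_mul_smul_comm, mul_assoc, ← mul_assoc (star Y), hTE, mul_smul_comm, hEE,
      smul_smul, hcc, one_smul]
  have hWsZ : star W * Z = 0 := by
    rw [hZ, mul_smul_comm, ← mul_assoc, hWsY, zero_mul, smul_zero]
  have hZsW : star Z * W = 0 := by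
    have := congrArg star hWsZ
    simpa using this
  have hZE : Z * E = Z := by rw [hZ, smul_mul_assoc, mul_assoc, hEE]
  have hZWs : Z * star W = 0 := by rw [hZ, smul_mul_assoc, mul_assoc, hEWs, mul_zero, smul_zero]
  have hsq : star (W + Z) * (W + Z) = star W * W + E := by
    rw [star_add, add_mul, mul_add, mul_add, hWsZ, hZsW, hZZ, add_zero, zero_add]
  have h1 : (W + Z) * (star W * W) = W := by
    rw [add_mul, hPI, ← mul_assoc Z, hZWs, zero_mul, add_zero]
  have h2 : (W + Z) * E = Z := by rw [add_mul, hWE, hZE, zero_add]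
  refine ⟨W + Z, add_mem hW hZM, ?_, h1, ?_, ?_⟩
  · rw [hsq, mul_add, h1, h2]
  · rw [hsq, add_mul, mul_assoc, hPI, ← mul_assoc E, hEWs, zero_mul, add_zero]
  · have hWW : W * (star (W + Z) * (W + Z)) = W := by rw [hsq, mul_add, hPI, hWE, add_zero]
    refine lt_of_le_of_ne ?_ ?_
    · intro x hx
      have hx' : (W + Z) x = 0 := hx
      show W x = 0
      rw [← hWW, ContinuousLinearMap.mul_apply, ContinuousLinearMap.mul_apply, hx', map_zero,
        map_zero]
    · intro heq
      apply hE0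
      ext y
      have hm : E y ∈ W.toLinearMap.ker := DFunLike.congr_fun hWE y
      rw [← heq] at hm
      have hm' : (W + Z) (E y) = 0 := hm
      have h3 : Z y = 0 := by
        rw [← hm', ← ContinuousLinearMap.mul_apply, h2]
      rw [← hZZ, ContinuousLinearMap.mul_apply, h3, map_zero]
      rfl

lemma aux_unitary (s : Set (H →L[ℂ] H)) (n : ℕ) : ∀ (W : H →L[ℂ] H)
    (_ : Module.finrank ℂ W.toLinearMap.ker = n)
    (_ : W ∈ StarSubalgebra.centralizer ℂ s) (_ : W * (star W * W) = W),
    ∃ V ∈ StarSubalgebra.centralizer ℂ s, star V * V = 1 ∧ V * (star W * W) = W := by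
  induction n using Nat.strong_induction_on with
  | _ n ih =>
    intro W hn hW hPI
    by_cases hker : ∃ x, W x = 0 ∧ x ≠ 0
    · obtain ⟨W', hW', hPI', h1, h2, hlt⟩ := aux_extend s W hW hPI hker
      obtain ⟨V, hV, hVV, h3⟩ := ih _ (hn ▸ Submodule.finrank_lt_finrank_of_lt hlt) W' rfl hW' hPI'
      refine ⟨V, hV, hVV, ?_⟩
      rw [← h2, ← mul_assoc, h3, h1]
    · push Not at hker
      refine ⟨W, hW, ?_, hPI⟩
      ext x
      have h : W ((star W * W) x - x) = 0 := by
        rw [map_sub, ← ContinuousLinearMap.mul_apply, hPI, sub_self]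
      exact sub_eq_zero.1 (hker _ h)

lemma aux_init {G : Type*} [Group G] (U : G →* (H ≃ₗᵢ[ℂ] H)) (ψ φ : H)
    (h : ∀ g, ⟪ψ, U g ψ⟫ = ⟪φ, U g φ⟫) :
    ∃ W ∈ StarSubalgebra.centralizer ℂ
      (Set.range fun g : G => ((U g).toContinuousLinearEquiv : H →L[ℂ] H)),
      W * (star W * W) = W ∧ (star W * W) ψ = ψ ∧ W ψ = φ := by
  have hmul : ∀ g k x, U (g * k) x = U g (U k x) := by
    intro g k x; rw [map_mul]; rfl
  have hone : ∀ x, U 1 x = x := by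
    intro x; rw [map_one]; rfl
  have hstar : ∀ g, star ((U g).toContinuousLinearEquiv : H →L[ℂ] H) =
      ((U g⁻¹).toContinuousLinearEquiv : H →L[ℂ] H) := by
    intro g
    rw [ContinuousLinearMap.star_eq_adjoint]
    symm
    rw [ContinuousLinearMap.eq_adjoint_iff]
    intro x y
    have := (U g).inner_map_map (U g⁻¹ x) y
    rw [← hmul, mul_inv_cancel, hone] at this
    exact this.symm
  have hgk : ∀ (ξ : H) g k, ⟪U g ξ, U k ξ⟫ = ⟪ξ, U (g⁻¹ * k) ξ⟫ := by
    intro ξ g k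
    have := (U g⁻¹).inner_map_map (U g ξ) (U k ξ)
    rw [← hmul, ← hmul, inv_mul_cancel, hone] at this
    exact this.symm
  let a := Finsupp.linearCombination ℂ (fun g => U g ψ)
  let b := Finsupp.linearCombination ℂ (fun g => U g φ)
  have hab : ∀ c d, ⟪b c, b d⟫ = ⟪a c, a d⟫ := by
    intro c d
    simp only [a, b, Finsupp.linearCombination_apply, Finsupp.sum, sum_inner, inner_sum,
      inner_smul_left, inner_smul_right, hgk, h]
  have hker : ∀ c, a c = 0 → b c = 0 := by
    intro c hc
    have := hab c c
    rw [hc, inner_zero_left] at this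
    simpa using this
  obtain ⟨t, ht⟩ := a.rangeRestrict.exists_rightInverse_of_surjective
    (LinearMap.range_eq_top.2 a.surjective_rangeRestrict)
  have ht' : ∀ y, a (t y) = y := fun y => congrArg Subtype.val (LinearMap.congr_fun ht y)
  let K := LinearMap.range a
  let W : H →L[ℂ] H := LinearMap.toContinuousLinearMap
    (b ∘ₗ t ∘ₗ (K.orthogonalProjectionOnto : H →ₗ[ℂ] K))
  have hWE : ∀ x, W (K.starProjection x) = W x := by
    intro x
    show b (t (K.orthogonalProjectionOnto (K.starProjection x))) =
      b (t (K.orthogonalProjectionOnto x))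
    rw [Submodule.starProjection_apply, Submodule.orthogonalProjectionOnto_mem_subspace_eq_self]
  have hWa : ∀ c, W (a c) = b c := by
    intro c
    have h1 : K.orthogonalProjectionOnto (a c) = ⟨a c, c, rfl⟩ :=
      Submodule.orthogonalProjectionOnto_mem_subspace_eq_self (K := K) ⟨a c, c, rfl⟩
    show b (t (K.orthogonalProjectionOnto (a c))) = b c
    rw [h1, ← sub_eq_zero, ← map_sub]
    apply hker
    rw [map_sub, ht', sub_self]
  have haU : ∀ g, a (Finsupp.single g 1) = U g ψ := by intro g; simp [a]
  have hbU : ∀ g, b (Finsupp.single g 1) = U g φ := by intro g; simp [b]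
  have hWU : ∀ g, W (U g ψ) = U g φ := by intro g; rw [← haU, hWa, hbU]
  have hshift : ∀ (ξ : H) g c, U g (Finsupp.linearCombination ℂ (fun g => U g ξ) c) =
      Finsupp.linearCombination ℂ (fun g => U g ξ) (Finsupp.mapDomain (g * ·) c) := by
    intro ξ g c
    rw [Finsupp.linearCombination_mapDomain]
    simp [Finsupp.linearCombination_apply, Finsupp.sum, map_sum, hmul]
  have hKU : ∀ g, ∀ x ∈ K, U g x ∈ K := by
    rintro g _ ⟨c, rfl⟩
    exact ⟨_, (hshift ψ g c).symm⟩
  have hE := aux_proj_mem (Set.range fun g : G => ((U g).toContinuousLinearEquiv : H →L[ℂ] H)) K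
    (by
      rintro _ ⟨g, rfl⟩ x hx
      refine ⟨hKU g x hx, ?_⟩
      simp only [hstar]
      exact hKU _ x hx)
  have hEU : ∀ g x, U g (K.starProjection x) = K.starProjection (U g x) := by
    intro g x
    rw [StarSubalgebra.mem_centralizer_iff] at hE
    exact DFunLike.congr_fun (hE _ ⟨g, rfl⟩).1 x
  have hcomm : ∀ g x, U g (W x) = W (U g x) := by
    intro g x
    rw [← hWE x, ← hWE (U g x), ← hEU]
    obtain ⟨c, hc⟩ : K.starProjection x ∈ K := Submodule.starProjection_apply_mem _ _
    rw [← hc, hWa, show U g (a c) = a _ from hshift ψ g c, hWa]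
    exact hshift φ g c
  have hWW : star W * W = K.starProjection := by
    ext x
    apply ext_inner_left ℂ
    intro y
    rw [ContinuousLinearMap.mul_apply, ContinuousLinearMap.star_eq_adjoint,
      ContinuousLinearMap.adjoint_inner_right, ← hWE x, ← hWE y]
    obtain ⟨c, hc⟩ : K.starProjection x ∈ K := Submodule.starProjection_apply_mem _ _
    obtain ⟨d, hd⟩ : K.starProjection y ∈ K := Submodule.starProjection_apply_mem _ _
    rw [← hc, ← hd, hWa, hWa, hab, hc, hd, Submodule.inner_starProjection_left_eq_right]
    rw [Submodule.starProjection_eq_self_iff.2 (Submodule.starProjection_apply_mem K x)]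
  refine ⟨W, ?_, ?_, ?_, ?_⟩
  · rw [StarSubalgebra.mem_centralizer_iff]
    rintro _ ⟨g, rfl⟩
    simp only [hstar]
    exact ⟨by ext x; exact hcomm g x, by ext x; exact hcomm g⁻¹ x⟩
  · rw [hWW]; ext x; exact hWE x
  · rw [hWW, Submodule.starProjection_eq_self_iff]
    exact ⟨Finsupp.single 1 1, by rw [haU, hone]⟩
  · have := hWU 1
    rwa [hone, hone] at this

end helpers

/-- **Theorem 1, reformulated.** Two unit vectors `ψ, φ` of a
finite-dimensional unitary representation `U` of `G` are unitarily `G`-equivalent iff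
`⟪ψ, A ψ⟫ = ⟪φ, A φ⟫` for every operator `A` in the linear span of `{U g : g ∈ G}`
inside the endomorphisms of `H` (equivalently, iff the reductions onto irreps of the
two states coincide). -/
theorem unitarily_G_equivalent_iff_expectations_on_span_eq
    {G : Type*} [Group G]
    {H : Type*} [NormedAddCommGroup H] [InnerProductSpace ℂ H] [FiniteDimensional ℂ H]
    (U : G →* (H ≃ₗᵢ[ℂ] H)) (ψ φ : H) (hψ : ‖ψ‖ = 1) (hφ : ‖φ‖ = 1) :
    (∃ V : H ≃ₗᵢ[ℂ] H, (∀ g : G, ∀ x : H, V (U g x) = U g (V x)) ∧ V ψ = φ) ↔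
      (∀ A ∈ Submodule.span ℂ
          (Set.range fun g : G => ((U g).toLinearEquiv.toLinearMap : H →ₗ[ℂ] H)),
        ⟪ψ, A ψ⟫ = ⟪φ, A φ⟫) := by
  haveI : CompleteSpace H := FiniteDimensional.complete ℂ H
  constructor
  · rintro ⟨V, hV, rfl⟩ A hA
    have hc : ∀ x, A (V x) = V (A x) := by
      induction hA using Submodule.span_induction with
      | mem A hA =>
        obtain ⟨g, rfl⟩ := hA
        intro x
        exact (hV g x).symm
      | zero => intro x; simp
      | add A B _ _ hA hB => intro x; simp [hA, hB]
      | smul c A _ hA => intro x; simp [hA]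
    rw [hc, V.inner_map_map]
  · intro h
    obtain ⟨W, hW, hPI, h1, h2⟩ := aux_init U ψ φ
      (fun g => h _ (Submodule.subset_span ⟨g, rfl⟩))
    obtain ⟨V, hV, hVV, h3⟩ := aux_unitary _ _ W rfl hW hPI
    have hiso : ∀ x, ‖V x‖ = ‖x‖ := by
      intro x
      have h4 : ⟪V x, V x⟫ = ⟪x, x⟫ := by
        rw [← ContinuousLinearMap.adjoint_inner_right, ← ContinuousLinearMap.star_eq_adjoint,
          ← ContinuousLinearMap.mul_apply, hVV, ContinuousLinearMap.one_apply]
      rw [@norm_eq_sqrt_re_inner ℂ, @norm_eq_sqrt_re_inner ℂ _ _ _ _ x, h4]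
    let L : H →ₗᵢ[ℂ] H := ⟨V.toLinearMap, hiso⟩
    refine ⟨L.toLinearIsometryEquiv rfl, ?_, ?_⟩
    · intro g x
      rw [StarSubalgebra.mem_centralizer_iff] at hV
      exact (DFunLike.congr_fun (hV _ ⟨g, rfl⟩).1 x).symm
    · show V ψ = φ
      rw [← h2, ← h3, ContinuousLinearMap.mul_apply, h1]
end

section
/- Let G be a finite group, H₁ and H₂ finite-dimensional complex inner product spaces, U₁ and U₂ unitary representations of G on H₁ and H₂, and ψ ∈ H₁, φ ∈ H₂ unit vectors with characteristic functions χ_ψ(g) = ⟪ψ, U₁(g) ψ⟫ and χ_φ(g) = ⟪φ, U₂(g) φ⟫. The following are equivalent: (A) there exist a finite-dimensional complex inner product space K, a unitary representation W of G on K, and a unit vector η ∈ K such that ⟪ψ, U₁(g) ψ⟫ = ⟪φ ⊗ η, (U₂(g) ⊗ W(g))(φ ⊗ η)⟫ for all g ∈ G; (B) there exists a positive definite function f : G → ℂ with f(1) = 1 such that χ_ψ(g) = χ_φ(g) · f(g) for all g ∈ G. -/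
open scoped ComplexInnerProductSpace ComplexOrder

/-- An extension of a finite-dimensional unitary representation `U₂` of `G` on `H₂` by
an ancilla: a finite-dimensional unitary representation `W` of `G` on a space `K` with
a vector `η`, together with a realization `T` of the tensor product `H₂ ⊗ K` — a
complex inner product space with a bilinear map `tmul` satisfying
`⟪a ⊗ b, c ⊗ d⟫ = ⟪a, c⟫·⟪b, d⟫` — carrying the tensor product representation
`g ↦ U₂ g ⊗ W g`. -/
structure TensorExtension {G : Type*} [Group G]
    {H₂ : Type*} [NormedAddCommGroup H₂] [InnerProductSpace ℂ H₂] [FiniteDimensional ℂ H₂]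
    (U₂ : G →* (H₂ ≃ₗᵢ[ℂ] H₂)) where
  K : Type
  [nK : NormedAddCommGroup K]
  [ipK : InnerProductSpace ℂ K]
  [fdK : FiniteDimensional ℂ K]
  W : G →* (K ≃ₗᵢ[ℂ] K)
  η : K
  T : Type
  [nT : NormedAddCommGroup T]
  [ipT : InnerProductSpace ℂ T]
  tmul : H₂ →ₗ[ℂ] K →ₗ[ℂ] T
  inner_tmul : ∀ (a c : H₂) (b d : K),
    (inner ℂ (tmul a b) (tmul c d) : ℂ) = inner ℂ a c * inner ℂ b d
  rep : G →* (T ≃ₗᵢ[ℂ] T)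
  rep_tmul : ∀ (g : G) (a : H₂) (b : K), rep g (tmul a b) = tmul (U₂ g a) (W g b)

attribute [instance] TensorExtension.nK TensorExtension.ipK TensorExtension.fdK
  TensorExtension.nT TensorExtension.ipT

open scoped TensorProduct in
/-- Transport of a unitary representation along an isometry. -/
noncomputable def conjRep {G : Type*} [Group G] {H K : Type*} [NormedAddCommGroup H]
    [InnerProductSpace ℂ H] [NormedAddCommGroup K] [InnerProductSpace ℂ K]
    (e : H ≃ₗᵢ[ℂ] K) (U : G →* (H ≃ₗᵢ[ℂ] H)) : G →* (K ≃ₗᵢ[ℂ] K) where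
  toFun g := (e.symm.trans (U g)).trans e
  map_one' := by ext x; simp
  map_mul' a b := by ext x; simp

open scoped TensorProduct in
/-- Tensor product of unitary representations. -/
noncomputable def tensRep {G : Type*} [Group G] {H K : Type*} [NormedAddCommGroup H]
    [InnerProductSpace ℂ H] [NormedAddCommGroup K] [InnerProductSpace ℂ K]
    (U : G →* (H ≃ₗᵢ[ℂ] H)) (W : G →* (K ≃ₗᵢ[ℂ] K)) :
    G →* ((H ⊗[ℂ] K) ≃ₗᵢ[ℂ] (H ⊗[ℂ] K)) where
  toFun g := TensorProduct.congrIsometry (U g) (W g)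
  map_one' := by
    ext x
    induction x using TensorProduct.induction_on with
    | zero => simp
    | tmul a b => rw [map_one, map_one]; rfl
    | add x y hx hy => rw [map_add, hx, hy, map_add]
  map_mul' a b := by
    ext x
    induction x using TensorProduct.induction_on with
    | zero => simp
    | tmul a b => rw [map_mul, map_mul]; rfl
    | add x y hx hy => rw [map_add, hx, hy, map_add]

/-- The extension built from an ancilla representation. -/
noncomputable def mkExt {G : Type*} [Group G]
    {H₂ : Type*} [NormedAddCommGroup H₂] [InnerProductSpace ℂ H₂] [FiniteDimensional ℂ H₂]
    (U₂ : G →* (H₂ ≃ₗᵢ[ℂ] H₂)) {H K : Type} [NormedAddCommGroup H] [InnerProductSpace ℂ H]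
    [NormedAddCommGroup K] [InnerProductSpace ℂ K] [FiniteDimensional ℂ K]
    (e : H₂ ≃ₗᵢ[ℂ] H) (W : G →* (K ≃ₗᵢ[ℂ] K)) (η : K) : TensorExtension U₂ where
  K := K
  W := W
  η := η
  T := TensorProduct ℂ H K
  tmul := (TensorProduct.mk ℂ H K).comp e.toLinearEquiv.toLinearMap
  inner_tmul a c b d := by
    change inner ℂ (TensorProduct.tmul ℂ (e a) b) (TensorProduct.tmul ℂ (e c) d) = _
    rw [TensorProduct.inner_tmul, LinearIsometryEquiv.inner_map_map]
  rep := tensRep (conjRep e U₂) W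
  rep_tmul g a b := by
    change TensorProduct.tmul ℂ (e (U₂ g (e.symm (e a)))) (W g b) =
      TensorProduct.tmul ℂ (e (U₂ g a)) (W g b)
    rw [LinearIsometryEquiv.symm_apply_apply]

/-- Right translation on functions on `G × G`. -/
noncomputable def transRep (G : Type*) [Group G] [Fintype G] :
    G →* (EuclideanSpace ℂ (G × G) ≃ₗᵢ[ℂ] EuclideanSpace ℂ (G × G)) where
  toFun g := LinearIsometryEquiv.piLpCongrLeft 2 ℂ ℂ
    ((Equiv.refl G).prodCongr (Equiv.mulRight g⁻¹))
  map_one' := by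
    ext x i
    change x (i.1, i.2 * (1⁻¹)⁻¹) = x i
    simp
  map_mul' a b := by
    ext x i
    change x (i.1, i.2 * ((a * b)⁻¹)⁻¹) = x (i.1, i.2 * (a⁻¹)⁻¹ * (b⁻¹)⁻¹)
    simp [mul_assoc]

theorem transRep_apply {G : Type*} [Group G] [Fintype G] (g : G)
    (v : EuclideanSpace ℂ (G × G)) (k h : G) : transRep G g v (k, h) = v (k, h * g) := by
  simp [transRep, LinearIsometryEquiv.piLpCongrLeft_apply, Equiv.piCongrLeft'_apply]

theorem exists_rep_of_posDef {G : Type*} [Group G] [Fintype G] (f : G → ℂ)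
    (hf : ∀ (n : ℕ) (g : Fin n → G),
          (Matrix.of fun i j : Fin n => f ((g i)⁻¹ * g j)).PosSemidef) :
    ∃ η : EuclideanSpace ℂ (G × G), ∀ g, ⟪η, transRep G g η⟫ = f g := by
  classical
  have hM : (Matrix.of fun i j : G => f (i⁻¹ * j)).PosSemidef := by
    have := (hf _ (Fintype.equivFin G).symm).submatrix (Fintype.equivFin G)
    convert this using 1
    ext i j
    simp
  obtain ⟨B, hB⟩ : ∃ B : Matrix G G ℂ, (Matrix.of fun i j : G => f (i⁻¹ * j)) = B.conjTranspose * B := by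
    open scoped MatrixOrder in
    exact CStarAlgebra.nonneg_iff_eq_star_mul_self.mp hM.nonneg
  have hn : (Fintype.card G : ℂ) ≠ 0 := by simp
  have hn' : ((Real.sqrt (Fintype.card G) : ℝ) : ℂ) * (Real.sqrt (Fintype.card G) : ℝ)
      = Fintype.card G := by
    rw [← Complex.ofReal_mul, Real.mul_self_sqrt (by positivity)]; simp
  let η₀ : EuclideanSpace ℂ (G × G) := WithLp.toLp 2 fun p => B p.1 p.2
  have key : ∀ g, ⟪η₀, transRep G g η₀⟫ = Fintype.card G * f g := by
    intro g
    rw [PiLp.inner_apply, Fintype.sum_prod_type_right]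
    have : ∀ h : G, ∑ k : G, ⟪η₀ (k, h), transRep G g η₀ (k, h)⟫ = f g := by
      intro h
      have := congrFun (congrFun hB h) (h * g)
      simp only [Matrix.of_apply, inv_mul_cancel_left, Matrix.mul_apply,
        Matrix.conjTranspose_apply] at this
      rw [this]
      refine Finset.sum_congr rfl fun k _ => ?_
      rw [transRep_apply]
      simp [η₀, mul_comm]
    rw [Finset.sum_congr rfl fun h _ => this h]
    simp
  refine ⟨((Real.sqrt (Fintype.card G) : ℝ) : ℂ)⁻¹ • η₀, fun g => ?_⟩
  rw [map_smul, inner_smul_left, inner_smul_right, key, map_inv₀, Complex.conj_ofReal,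
    ← mul_assoc, ← mul_inv, hn', ← mul_assoc, inv_mul_cancel₀ hn, one_mul]

/-- **Theorem 4, kinematical form.** For unit vectors `ψ, φ` of
finite-dimensional unitary representations `U₁, U₂` of a finite group `G`, the
characteristic function of `ψ` equals that of `φ ⊗ η` for some unit vector `η` of some
ancillary unitary representation `W` of `G` iff `χ_ψ = χ_φ · f` for some positive
definite function `f` on `G` with `f 1 = 1`. -/
theorem charFun_factors_iff_posDef_ratio
    {G : Type*} [Group G] [Finite G]
    {H₁ : Type*} [NormedAddCommGroup H₁] [InnerProductSpace ℂ H₁] [FiniteDimensional ℂ H₁]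
    {H₂ : Type*} [NormedAddCommGroup H₂] [InnerProductSpace ℂ H₂] [FiniteDimensional ℂ H₂]
    (U₁ : G →* (H₁ ≃ₗᵢ[ℂ] H₁)) (U₂ : G →* (H₂ ≃ₗᵢ[ℂ] H₂))
    (ψ : H₁) (φ : H₂) (hψ : ‖ψ‖ = 1) (hφ : ‖φ‖ = 1) :
    (∃ d : TensorExtension U₂, ‖d.η‖ = 1 ∧
        ∀ g : G, ⟪ψ, U₁ g ψ⟫ = ⟪d.tmul φ d.η, d.rep g (d.tmul φ d.η)⟫) ↔
      (∃ f : G → ℂ, f 1 = 1 ∧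
        (∀ (n : ℕ) (g : Fin n → G),
          (Matrix.of fun i j : Fin n => f ((g i)⁻¹ * g j)).PosSemidef) ∧
        ∀ g : G, ⟪ψ, U₁ g ψ⟫ = ⟪φ, U₂ g φ⟫ * f g) := by
  constructor
  · rintro ⟨d, hη, h⟩
    refine ⟨fun g => ⟪d.η, d.W g d.η⟫, ?_, ?_, ?_⟩
    · simp [inner_self_eq_norm_sq_to_K, hη]
    · intro n g
      have hg : (Matrix.of fun i j : Fin n => ⟪d.η, d.W ((g i)⁻¹ * g j) d.η⟫) =
          Matrix.gram ℂ (fun i => d.W (g i) d.η) := ?_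
      · exact hg ▸ Matrix.posSemidef_gram ℂ (fun i => d.W (g i) d.η)
      apply Matrix.ext
      intro i j
      rw [Matrix.of_apply, Matrix.gram_apply, ← LinearIsometryEquiv.inner_map_map (d.W (g i))]
      have hm : d.W (g i) (d.W ((g i)⁻¹ * g j) d.η) = d.W (g j) d.η := by
        change (d.W (g i) * d.W ((g i)⁻¹ * g j)) d.η = _
        rw [← map_mul, mul_inv_cancel_left]
      rw [hm]
    · intro g
      rw [h, d.rep_tmul, d.inner_tmul]
  · rintro ⟨f, h1, hf, h⟩
    have := Fintype.ofFinite G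
    obtain ⟨η, hη⟩ := exists_rep_of_posDef f hf
    obtain ⟨n, ⟨e₁⟩⟩ : ∃ n : ℕ, Nonempty (EuclideanSpace ℂ (G × G) ≃ₗᵢ[ℂ] EuclideanSpace ℂ (Fin n)) :=
      ⟨_, ⟨(stdOrthonormalBasis ℂ (EuclideanSpace ℂ (G × G))).repr⟩⟩
    obtain ⟨m, ⟨e₂⟩⟩ : ∃ n : ℕ, Nonempty (H₂ ≃ₗᵢ[ℂ] EuclideanSpace ℂ (Fin n)) :=
      ⟨_, ⟨(stdOrthonormalBasis ℂ H₂).repr⟩⟩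
    have hW : ∀ g, ⟪e₁ η, conjRep e₁ (transRep G) g (e₁ η)⟫ = f g := by
      intro g
      simp [conjRep, hη]
    refine ⟨mkExt U₂ e₂ (conjRep e₁ (transRep G)) (e₁ η), ?_, ?_⟩
    · have h2 := hW 1
      rw [map_one, LinearIsometryEquiv.coe_one, id_eq, h1] at h2
      have h3 : ‖e₁ η‖ ^ 2 = 1 := by
        rw [← inner_self_eq_norm_sq (𝕜 := ℂ), h2]; simp
      exact (pow_eq_one_iff_of_nonneg (norm_nonneg _) two_ne_zero).mp h3
    · intro g
      rw [h, ← hW g, TensorExtension.rep_tmul, TensorExtension.inner_tmul]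
      rfl
end

section
/- Let G be a group, H a complex inner product space, U : G →* (H ≃ₗᵢ[ℂ] H) a unitary representation, and ψ, φ ∈ H unit vectors. If their characteristic functions coincide, ⟪ψ, U(g) ψ⟫ = ⟪φ, U(g) φ⟫ for all g ∈ G, then their symmetry subgroups coincide: for every g ∈ G, there exists c ∈ ℂ with U(g) ψ = c • ψ if and only if there exists c' ∈ ℂ with U(g) φ = c' • φ. -/
open scoped ComplexInnerProductSpace

/-- If two unit vectors `ψ, φ` of a unitary representation `U` of `G`
have equal characteristic functions, then they have the same symmetry subgroup: `ψ` is
an eigenvector of `U g` iff `φ` is. -/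
theorem symmetryGroup_eq_of_charFun_eq
    {G : Type*} [Group G]
    {H : Type*} [NormedAddCommGroup H] [InnerProductSpace ℂ H]
    (U : G →* (H ≃ₗᵢ[ℂ] H)) (ψ φ : H) (hψ : ‖ψ‖ = 1) (hφ : ‖φ‖ = 1)
    (hchar : ∀ g : G, ⟪ψ, U g ψ⟫ = ⟪φ, U g φ⟫) :
    ∀ g : G, (∃ c : ℂ, U g ψ = c • ψ) ↔ (∃ c' : ℂ, U g φ = c' • φ) := by
  have key : ∀ (x : H), ‖x‖ = 1 → ∀ g : G,
      (‖⟪x, U g x⟫‖ = 1 ↔ ∃ c : ℂ, U g x = c • x) := by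
    intro x hx g
    have hx0 : x ≠ 0 := by
      rintro rfl
      simp at hx
    have h : ‖⟪x, U g x⟫‖ = ‖x‖ * ‖U g x‖ ↔ x = 0 ∨ ∃ r : ℂ, U g x = r • x :=
      (norm_inner_eq_norm_tfae ℂ x (U g x)).out 0 2
    rw [LinearIsometryEquiv.norm_map, hx, mul_one, or_iff_right hx0] at h
    exact h
  intro g
  rw [← key ψ hψ g, ← key φ hφ g, hchar g]
end
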